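/- arXiv:1906.03594 — 4 statements merged into one kernel-verified Lean document; each statement's English description precedes it below -/
import Mathlib

section
/- Let q_0 = X_0^2, q_1 = X_1^2, q_2 = X_2^2, q_3 = X_3^2, q_4 = X_4^2 and q_5 = X_0*X_1 + X_2*X_3 in the polynomial ring ℂ[X_0,…,X_4]. Then for every homogeneous polynomial f of degree 4 in ℂ[X_0,…,X_4] there exist homogeneous polynomials r_0,…,r_5 of degree 2 such that f = Σ_{i=0}^{5} q_i · r_i. Equivalently, the ℂ-linear map (r_0,…,r_5) ↦ Σ_{i=0}^{5} q_i·r_i from sextuples of homogeneous quadratic forms to homogeneous quartic forms in five variables is surjective. -/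
/-!
Quartics in the image of `(r₀,…,r₅) ↦ ∑ qᵢ rᵢ` are closed under addition, so it suffices to treat the
monomials of degree 4. If some exponent is at least 2, the monomial is a multiple of some `Xᵢ² = qᵢ`.
Otherwise it is the product of four distinct variables, hence divisible by `X₀X₁` or `X₂X₃`;
modulo `q₅ = X₀X₁ + X₂X₃` one of these products can be traded for the other, and this can always be
done so that a square of a variable appears, e.g. `X₀X₁X₂X₃ = q₅ X₀X₁ - q₀ X₁²`.
-/

open MvPolynomial

/-- The six quadrics `X₀², X₁², X₂², X₃², X₄², X₀X₁ + X₂X₃` in `ℂ[X₀,…,X₄]`. -/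
noncomputable def q : Fin 6 → MvPolynomial (Fin 5) ℂ :=
  ![X 0 ^ 2, X 1 ^ 2, X 2 ^ 2, X 3 ^ 2, X 4 ^ 2, X 0 * X 1 + X 2 * X 3]

/-- `f` lies in the image of `(r₀,…,r₅) ↦ ∑ qᵢ rᵢ` on sextuples of quadratic forms. -/
def InImage (f : MvPolynomial (Fin 5) ℂ) : Prop :=
  ∃ r : Fin 6 → MvPolynomial (Fin 5) ℂ, (∀ i, (r i).IsHomogeneous 2) ∧ f = ∑ i, q i * r i

lemma InImage.add {f g : MvPolynomial (Fin 5) ℂ} (hf : InImage f) (hg : InImage g) :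
    InImage (f + g) := by
  obtain ⟨r, hr, rfl⟩ := hf
  obtain ⟨s, hs, rfl⟩ := hg
  exact ⟨fun i => r i + s i, fun i => (hr i).add (hs i), by
    simp only [mul_add, Finset.sum_add_distrib]⟩

lemma inImage_zero : InImage 0 :=
  ⟨fun _ => 0, fun _ => isHomogeneous_zero _ _ _, by simp⟩

lemma inImage_q_mul (i : Fin 6) {g : MvPolynomial (Fin 5) ℂ} (hg : g.IsHomogeneous 2) :
    InImage (q i * g) := by
  refine ⟨Pi.single i g, fun j => ?_, ?_⟩
  · by_cases h : j = i
    · subst h; simpa using hg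
    · simpa [Pi.single_eq_of_ne h] using isHomogeneous_zero _ _ _
  · rw [Finset.sum_eq_single i]
    · simp
    · intro j _ h; simp [Pi.single_eq_of_ne h]
    · simp

lemma isHomogeneous_C_mul_X_mul_X (c : ℂ) (i j : Fin 5) :
    (C c * (X i * X j) : MvPolynomial (Fin 5) ℂ).IsHomogeneous 2 := by
  simpa using (isHomogeneous_C (Fin 5) c).mul ((isHomogeneous_X ℂ i).mul (isHomogeneous_X ℂ j))

/-- Trading one product of two variables for another modulo `q₅`, at the cost of a multiple
of `qₖ`. -/
lemma inImage_of_eq {f : MvPolynomial (Fin 5) ℂ} (c : ℂ) (k : Fin 6) (i j i' j' : Fin 5)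
    (h : f = q 5 * (C c * (X i * X j)) + q k * (C (-c) * (X i' * X j'))) : InImage f := by
  rw [h]
  exact (inImage_q_mul _ (isHomogeneous_C_mul_X_mul_X _ _ _)).add
    (inImage_q_mul _ (isHomogeneous_C_mul_X_mul_X _ _ _))

lemma q_castSucc (i : Fin 5) : q i.castSucc = X i ^ 2 := by
  fin_cases i <;> rfl

lemma inImage_monomial (d : Fin 5 →₀ ℕ) (hd : d.degree = 4) (c : ℂ) :
    InImage (monomial d c) := by
  by_cases h : ∃ i, 2 ≤ d i
  · obtain ⟨i, hi⟩ := h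
    have hle : Finsupp.single i 2 ≤ d := by simpa using hi
    have key : monomial d c = q i.castSucc * monomial (d - Finsupp.single i 2) c := by
      rw [q_castSucc, X_pow_eq_monomial, monomial_mul, one_mul, add_tsub_cancel_of_le hle]
    rw [key]
    refine inImage_q_mul _ (isHomogeneous_monomial _ ?_)
    have h2 := congrArg Finsupp.degree (add_tsub_cancel_of_le hle)
    rw [map_add, Finsupp.degree_single, hd] at h2
    omega
  · push Not at h
    have h0 := h 0
    have h1 := h 1
    have h2 := h 2
    have h3 := h 3
    have h4 := h 4
    rw [Finsupp.degree_eq_sum, Fin.sum_univ_five] at hd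
    have hm : monomial d c = C c * (X 0 ^ d 0 * X 1 ^ d 1 * X 2 ^ d 2 * X 3 ^ d 3 * X 4 ^ d 4) := by
      rw [monomial_eq, Finsupp.prod_fintype _ _ (by simp), Fin.prod_univ_five]
    rw [hm]
    -- Exactly one exponent vanishes and the other four are equal to 1.
    obtain h | h | h | h | h :
        (d 0 = 0 ∧ d 1 = 1 ∧ d 2 = 1 ∧ d 3 = 1 ∧ d 4 = 1) ∨
        (d 0 = 1 ∧ d 1 = 0 ∧ d 2 = 1 ∧ d 3 = 1 ∧ d 4 = 1) ∨
        (d 0 = 1 ∧ d 1 = 1 ∧ d 2 = 0 ∧ d 3 = 1 ∧ d 4 = 1) ∨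
        (d 0 = 1 ∧ d 1 = 1 ∧ d 2 = 1 ∧ d 3 = 0 ∧ d 4 = 1) ∨
        (d 0 = 1 ∧ d 1 = 1 ∧ d 2 = 1 ∧ d 3 = 1 ∧ d 4 = 0) := by omega
    all_goals
      obtain ⟨e0, e1, e2, e3, e4⟩ := h
      rw [e0, e1, e2, e3, e4]
    · refine inImage_of_eq c 1 1 4 0 4 ?_
      simp [q]; ring
    · refine inImage_of_eq c 0 0 4 1 4 ?_
      simp [q]; ring
    · refine inImage_of_eq c 3 3 4 2 4 ?_
      simp [q]; ring
    · refine inImage_of_eq c 2 2 4 3 4 ?_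
      simp [q]; ring
    · refine inImage_of_eq c 0 0 1 1 1 ?_
      simp [q]; ring

/-- Every homogeneous quartic form in five variables is a combination `∑ qᵢ rᵢ`
with the `rᵢ` homogeneous quadratic forms. -/
theorem stmt_0 :
    ∀ f : MvPolynomial (Fin 5) ℂ, f.IsHomogeneous 4 →
      ∃ r : Fin 6 → MvPolynomial (Fin 5) ℂ,
        (∀ i, (r i).IsHomogeneous 2) ∧ f = ∑ i, q i * r i := by
  intro f hf
  change InImage f
  rw [f.as_sum]
  refine Finset.sum_induction _ InImage (fun _ _ => InImage.add) inImage_zero fun d hd => ?_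
  refine inImage_monomial d ?_ _
  rw [Finsupp.degree_eq_weight_one]
  exact hf (mem_support_iff.mp hd)
end

section
/- Let q_0 = X_0^2, q_1 = X_1^2, q_2 = X_2^2, q_3 = X_3^2, q_4 = X_4^2 and q_5 = X_0*X_1 + X_2*X_3 in the polynomial ring ℂ[X_0,…,X_4]. If ℓ_0,…,ℓ_5 are homogeneous polynomials of degree 1 in ℂ[X_0,…,X_4] satisfying Σ_{i=0}^{5} ℓ_i · q_i = 0, then ℓ_i = 0 for all i. In other words, the six quadrics q_0,…,q_5 admit no nonzero linear syzygy. -/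
/-! For each `j` there is a squarefree cubic monomial divisible by `X_j` which is the product of
`X_j` with exactly one of `X₀X₁`, `X₂X₃` and is not divisible by the other: take `X_jX₂X₃` for
`j = 0, 1` and `X_jX₀X₁` for `j = 2, 3, 4`. Being squarefree, it does not occur in any multiple of
a square `X_k²`, so its coefficient in `∑ ℓᵢ qᵢ` is the coefficient of `X_j` in `ℓ₅`. Hence
`ℓ₅ = 0`, and the relation becomes `∑ ℓᵢ X_i² = 0`. The monomials `X_j X_i²` are pairwise
distinct, so reading off their coefficients kills the other `ℓᵢ`. -/

open MvPolynomial

lemma eq_zero_of_coeff_single {σ R : Type*} [CommSemiring R] {p : MvPolynomial σ R}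
    (hp : p.IsHomogeneous 1) (h : ∀ j, coeff (Finsupp.single j 1) p = 0) : p = 0 := by
  ext d
  by_contra hd
  rw [coeff_zero] at hd
  have h1 := hp hd
  rw [Finsupp.weight_apply] at h1
  simp only [Pi.one_apply, smul_eq_mul, mul_one] at h1
  obtain ⟨a, rfl⟩ := (Finsupp.sum_eq_one_iff d).mp h1
  exact hd (h a)

lemma coeff_mul_X_sq_of_lt {σ R : Type*} [CommSemiring R] (p : MvPolynomial σ R) {m : σ →₀ ℕ}
    {k : σ} (h : m k < 2) : coeff m (p * X k ^ 2) = 0 := by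
  rw [X_pow_eq_monomial, coeff_mul_monomial', if_neg]
  rw [Finsupp.single_le_iff]
  omega

lemma coeff_mul_X_mul_X_of_eq_zero {σ R : Type*} [CommSemiring R] (p : MvPolynomial σ R)
    {m : σ →₀ ℕ} {a b : σ} (h : m a = 0 ∨ m b = 0) : coeff m (p * (X a * X b)) = 0 := by
  classical
  rcases h with h | h
  · rw [mul_comm (X a), ← mul_assoc, coeff_mul_X', if_neg (by simpa using h)]
  · rw [← mul_assoc, coeff_mul_X', if_neg (by simpa using h)]

lemma coeff_mul_X_mul_X_add {σ R : Type*} [CommSemiring R] (p : MvPolynomial σ R)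
    (m : σ →₀ ℕ) (a b : σ) :
    coeff (m + Finsupp.single a 1 + Finsupp.single b 1) (p * (X a * X b)) = coeff m p := by
  rw [← mul_assoc, coeff_mul_X, coeff_mul_X]

/-- The squares `X_k²` have no nonzero linear syzygy. -/
lemma linear_syzygy_squares {σ R : Type*} [Fintype σ] [CommSemiring R]
    {l : σ → MvPolynomial σ R} (hl : ∀ i, (l i).IsHomogeneous 1)
    (h : ∑ i, l i * X i ^ 2 = 0) (i : σ) : l i = 0 := by
  classical
  refine eq_zero_of_coeff_single (hl i) fun j => ?_
  have hc := congrArg (coeff (Finsupp.single j 1 + Finsupp.single i 2)) h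
  rw [coeff_sum, Finset.sum_eq_single_of_mem i (Finset.mem_univ i)] at hc
  · simpa [X_pow_eq_monomial] using hc
  · intro k _ hk
    apply coeff_mul_X_sq_of_lt
    simp only [Finsupp.add_apply, Finsupp.single_apply, hk.symm, if_false]
    split_ifs <;> omega

/-- The six quadrics admit no nonzero linear syzygy: if `∑ ℓᵢ qᵢ = 0` with the `ℓᵢ`
homogeneous linear forms, then all the `ℓᵢ` vanish. -/
theorem stmt_1 :
    ∀ l : Fin 6 → MvPolynomial (Fin 5) ℂ, (∀ i, (l i).IsHomogeneous 1) →
      ∑ i, l i * q i = 0 → ∀ i, l i = 0 := by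
  intro l hl h
  have h' : ∑ i : Fin 5, l i.castSucc * X i ^ 2
      + (l 5 * (X 0 * X 1) + l 5 * (X 2 * X 3)) = 0 := by
    rw [← h, Fin.sum_univ_castSucc (n := 5), ← mul_add]
    congr 1
  have key : ∀ m : Fin 5 →₀ ℕ, (∀ k, m k < 2) →
      coeff m (l 5 * (X 0 * X 1)) + coeff m (l 5 * (X 2 * X 3)) = 0 := by
    intro m hm
    have hc := congrArg (coeff m) h'
    rwa [coeff_add, coeff_sum, Finset.sum_eq_zero fun k _ => coeff_mul_X_sq_of_lt _ (hm k),
      zero_add, coeff_add, coeff_zero] at hc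
  have h5 : l 5 = 0 := by
    refine eq_zero_of_coeff_single (hl 5) fun j => ?_
    by_cases hj : j = 0 ∨ j = 1
    · have hk := key (Finsupp.single j 1 + Finsupp.single 2 1 + Finsupp.single 3 1) (by
        intro k
        rcases hj with rfl | rfl <;> fin_cases k <;> simp)
      rwa [coeff_mul_X_mul_X_add, coeff_mul_X_mul_X_of_eq_zero, zero_add] at hk
      rcases hj with rfl | rfl <;> simp
    · have hj' : j = 2 ∨ j = 3 ∨ j = 4 := by omega
      have hk := key (Finsupp.single j 1 + Finsupp.single 0 1 + Finsupp.single 1 1) (by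
        intro k
        rcases hj' with rfl | rfl | rfl <;> fin_cases k <;> simp)
      rwa [coeff_mul_X_mul_X_add, coeff_mul_X_mul_X_of_eq_zero, add_zero] at hk
      rcases hj' with rfl | rfl | rfl <;> simp
  rw [h5, zero_mul, zero_mul, add_zero, add_zero] at h'
  intro i
  induction i using Fin.lastCases with
  | last => exact h5
  | cast i =>
    exact linear_syzygy_squares (l := fun i : Fin 5 => l i.castSucc)
      (fun i => hl i.castSucc) h' i
end

section
/- Consider the map p which sends a sextuple (q_0,…,q_5) of homogeneous polynomials of degree 2 in ℂ[X_0,…,X_4] to the homogeneous polynomial of degree 4 given by p(q_0,…,q_5) = q_0 q_3 + q_1 q_4 + q_2 q_5. Then p is dominant onto the space of quartic forms: if G is a polynomial function on the 70-dimensional ℂ-vector space of homogeneous quartic forms in X_0,…,X_4 (i.e., a polynomial in the coefficients of a quartic) such that G(p(q_0,…,q_5)) = 0 for every sextuple (q_0,…,q_5) of quadratic forms, then G = 0. In particular, the set of quartic forms expressible as q_0 q_3 + q_1 q_4 + q_2 q_5 is Zariski-dense in the space of all quartic forms. -/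
/-!
The differential of `p` at a sextuple `Q` sends `h` to
`Q₀h₃ + Q₃h₀ + Q₁h₄ + Q₄h₁ + Q₂h₅ + Q₅h₂`, so its image is the quartic part of the ideal
`(Q₀, …, Q₅)`. For `Q = (X₀², …, X₄², ∑ᵢ XᵢXᵢ₊₁)` (indices mod 5) this is every quartic: a quartic
monomial is either divisible by a square `Xᵢ²`, or it is a product of four distinct variables
`XᵢXᵢ₊₂Xᵢ₊₃Xᵢ₊₄`, which is congruent to `XᵢXᵢ₊₂ · Q₅` modulo `Xᵢ²` and `Xᵢ₊₂²`
(`exists_tangent`). A linear right inverse `L` of the differential then gives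
`p(Q + L w) = p(Q) + w + B(w, w)` with `B` bilinear. The right-hand side has the identity as its
derivative at `w = 0`, so by the inverse function theorem the image of `p` contains a
neighbourhood of `p(Q)` for the Euclidean topology (`range_mem_nhds`). A polynomial function
vanishing on a nonempty open set is zero (`eq_zero_of_eval_eventually`).
-/

open MvPolynomial

/-- The index set of the coefficients of a quartic form. -/
abbrev QuarticExp : Type := {d : Fin 5 →₀ ℕ // ∑ i : Fin 5, d i = 4}

instance : Finite QuarticExp := by
  refine Finite.of_injective
    (fun (m : QuarticExp) (i : Fin 5) => (⟨m.1 i, ?_⟩ : Fin 5)) ?_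
  · have h := Finset.single_le_sum (f := fun i => m.1 i) (fun _ _ => Nat.zero_le _)
      (Finset.mem_univ i)
    have := m.2
    omega
  · intro m m' h
    ext i
    simpa using congrFun h i

noncomputable instance : Fintype QuarticExp := Fintype.ofFinite _

/-- The bilinear form whose associated quadratic map is `p`: `p q = pairing q q`. -/
noncomputable def pairing (q r : Fin 6 → MvPolynomial (Fin 5) ℂ) : MvPolynomial (Fin 5) ℂ :=
  q 0 * r 3 + q 1 * r 4 + q 2 * r 5

/-- The cyclic quadric `∑ᵢ XᵢXᵢ₊₁`, indices mod 5. -/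
noncomputable def cyc : MvPolynomial (Fin 5) ℂ := ∑ i, X i * X (i + 1)

/-- The point at which the differential of `p` is shown to be surjective. -/
noncomputable def basePoint : Fin 6 → MvPolynomial (Fin 5) ℂ :=
  ![X 0 ^ 2, X 1 ^ 2, X 2 ^ 2, X 3 ^ 2, X 4 ^ 2, cyc]

lemma isHomogeneous_X_mul_X (i j : Fin 5) :
    (X i * X j : MvPolynomial (Fin 5) ℂ).IsHomogeneous 2 :=
  (isHomogeneous_X ℂ i).mul (isHomogeneous_X ℂ j)

lemma basePoint_isHomogeneous (i : Fin 6) : (basePoint i).IsHomogeneous 2 := by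
  have hc : cyc.IsHomogeneous 2 :=
    IsHomogeneous.sum _ _ _ fun i _ => isHomogeneous_X_mul_X i (i + 1)
  fin_cases i
  · exact isHomogeneous_X_pow 0 2
  · exact isHomogeneous_X_pow 1 2
  · exact isHomogeneous_X_pow 2 2
  · exact isHomogeneous_X_pow 3 2
  · exact isHomogeneous_X_pow 4 2
  · exact hc

lemma exists_of_squarefree (m : QuarticExp) (hm : ∀ i, m.1 i ≤ 1) :
    ∃ i : Fin 5, monomial m.1 (1 : ℂ) = X i * X (i + 2) * X (i + 3) * X (i + 4) := by
  obtain ⟨m, hs⟩ := m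
  simp only at hm ⊢
  -- `X (i + 1)` is the one variable missing from the monomial.
  obtain ⟨i, hi⟩ : ∃ i : Fin 5, m (i + 1) = 0 := by
    by_contra! h
    have h0 := h 0
    have h1 := h 1
    have h2 := h 2
    have h3 := h 3
    have h4 := h 4
    simp [Fin.sum_univ_five] at *
    omega
  refine ⟨i, ?_⟩
  have key : m = Finsupp.single i 1 + Finsupp.single (i + 2) 1 + Finsupp.single (i + 3) 1
      + Finsupp.single (i + 4) 1 := by
    have h0 := hm 0
    have h1 := hm 1
    have h2 := hm 2
    have h3 := hm 3
    have h4 := hm 4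
    rw [Fin.sum_univ_five] at hs
    ext j
    fin_cases i <;> fin_cases j <;> simp at hi ⊢ <;> omega
  rw [key]
  simp only [X, monomial_mul, mul_one]

/-- Every quartic monomial lies in the ideal generated by the squares of the variables and `cyc`,
with quadratic coefficients. -/
lemma exists_ideal_rep (m : QuarticExp) :
    ∃ (h : Fin 5 → MvPolynomial (Fin 5) ℂ) (g : MvPolynomial (Fin 5) ℂ),
      (∀ i, (h i).IsHomogeneous 2) ∧ g.IsHomogeneous 2 ∧
      ∑ i, X i ^ 2 * h i + cyc * g = monomial m.1 1 := by
  by_cases hm : ∀ i, m.1 i ≤ 1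
  · obtain ⟨i, hi⟩ := exists_of_squarefree m hm
    -- In `X i * X (i + 2) * cyc`, four of the five terms are divisible by `X i ^ 2` or
    -- `X (i + 2) ^ 2`; the fifth is the given monomial.
    refine ⟨fun j => if j = i then -(X (i + 1) * X (i + 2) + X (i + 2) * X (i + 4))
      else if j = i + 2 then -(X i * X (i + 1) + X i * X (i + 3)) else 0,
      X i * X (i + 2), ?_, isHomogeneous_X_mul_X _ _, ?_⟩
    · intro j
      dsimp only
      split_ifs
      · exact ((isHomogeneous_X_mul_X _ _).add (isHomogeneous_X_mul_X _ _)).neg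
      · exact ((isHomogeneous_X_mul_X _ _).add (isHomogeneous_X_mul_X _ _)).neg
      · exact isHomogeneous_zero _ _ _
    · rw [hi, cyc]
      fin_cases i <;> simp [Fin.sum_univ_five] <;> ring
  · push Not at hm
    obtain ⟨i, hi⟩ := hm
    have hle : Finsupp.single i 2 ≤ m.1 := by simpa using Nat.succ_le_of_lt hi
    refine ⟨Pi.single i (monomial (m.1 - Finsupp.single i 2) 1), 0, ?_,
      isHomogeneous_zero _ _ _, ?_⟩
    · intro j
      rcases eq_or_ne j i with rfl | hj
      · rw [Pi.single_eq_same]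
        refine isHomogeneous_monomial _ ?_
        have h1 : (m.1 - Finsupp.single j 2).degree + (Finsupp.single j 2).degree = 4 := by
          rw [← map_add, tsub_add_cancel_of_le hle, Finsupp.degree_eq_sum, m.2]
        rw [Finsupp.degree_single] at h1
        omega
      · rw [Pi.single_eq_of_ne hj]
        exact isHomogeneous_zero _ _ _
    · rw [Finset.sum_eq_single i]
      · rw [Pi.single_eq_same, mul_zero, add_zero, X_pow_eq_monomial, monomial_mul, one_mul,
          add_tsub_cancel_of_le hle]
      · intro j _ hj
        rw [Pi.single_eq_of_ne hj, mul_zero]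
      · simp

/-- Surjectivity of the differential `h ↦ pairing Q h + pairing h Q` of `p` at `Q = basePoint`. -/
lemma exists_tangent (m : QuarticExp) :
    ∃ h : Fin 6 → MvPolynomial (Fin 5) ℂ, (∀ i, (h i).IsHomogeneous 2) ∧
      pairing basePoint h + pairing h basePoint = monomial m.1 1 := by
  obtain ⟨h, g, hh, hg, e⟩ := exists_ideal_rep m
  refine ⟨![h 3, h 4, g, h 0, h 1, h 2], ?_, ?_⟩
  · intro i
    fin_cases i
    exacts [hh 3, hh 4, hg, hh 0, hh 1, hh 2]
  · rw [← e, Fin.sum_univ_five]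
    simp [pairing, basePoint]
    ring

/-- A polynomial function vanishing near a point, for the Euclidean topology, is zero. -/
lemma eq_zero_of_eval_eventually {σ : Type*} [Finite σ] (G : MvPolynomial σ ℂ) (c : σ → ℂ)
    (h : ∀ᶠ x in nhds c, eval x G = 0) : G = 0 := by
  have := Fintype.ofFinite σ
  rw [nhds_pi, Filter.Eventually, Filter.mem_pi'] at h
  obtain ⟨I, t, ht, hsub⟩ := h
  refine funext_set t (fun i => infinite_of_mem_nhds (c i) (ht i)) fun x hx => ?_
  rw [map_zero]
  exact hsub fun i _ => hx i (Set.mem_univ i)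

/-- The inverse function theorem for a quadratic perturbation of a translation. -/
lemma range_mem_nhds {V : Type*} [NormedAddCommGroup V] [NormedSpace ℂ V] [FiniteDimensional ℂ V]
    (c : V) (B : V →ₗ[ℂ] V →ₗ[ℂ] V) : Set.range (fun w => c + w + B w w) ∈ nhds c := by
  have := FiniteDimensional.complete ℂ V
  have hB := B.toContinuousBilinearMap.hasStrictFDerivAt_of_bilinear
    (hasStrictFDerivAt_id (𝕜 := ℂ) (0 : V)) (hasStrictFDerivAt_id (𝕜 := ℂ) (0 : V))
  have hF := ((hasStrictFDerivAt_id (𝕜 := ℂ) (0 : V)).const_add c).add hB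
  have hmap := hF.map_nhds_eq_of_surj (by
    rw [LinearMap.range_eq_top]
    intro v
    exact ⟨v, by simp⟩)
  have h := Filter.range_mem_map (f := nhds (0 : V)) (m := fun w => c + w + B w w)
  have h2 : Filter.map (fun w => c + w + B w w) (nhds (0 : V)) = nhds c := by
    convert hmap using 2
    · simp
      rfl
    · simp
  rwa [h2] at h

/-- The map `p(q₀,…,q₅) = q₀q₃ + q₁q₄ + q₂q₅` from sextuples of quadratic forms in
`ℂ[X₀,…,X₄]` to quartic forms is dominant: any polynomial function `G` in the
coefficients of a quartic form (indexed by the monomials of total degree 4) that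
vanishes on every quartic of the form `q₀q₃ + q₁q₄ + q₂q₅` is identically zero. -/
theorem stmt_2 :
    ∀ G : MvPolynomial {d : Fin 5 →₀ ℕ // ∑ i : Fin 5, d i = 4} ℂ,
      (∀ q : Fin 6 → MvPolynomial (Fin 5) ℂ, (∀ i, (q i).IsHomogeneous 2) →
        MvPolynomial.eval
          (fun m => (q 0 * q 3 + q 1 * q 4 + q 2 * q 5).coeff m.val) G = 0) →
      G = 0 := by
  intro G hG
  choose h hhom hh using exists_tangent
  -- `L` is a linear right inverse of the differential of `p` at `basePoint`.
  let L : (QuarticExp → ℂ) →ₗ[ℂ] (Fin 6 → MvPolynomial (Fin 5) ℂ) :=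
    Fintype.linearCombination ℂ h
  have hL (w : QuarticExp → ℂ) (i : Fin 6) : L w i = ∑ m, w m • h m i := by
    simp [L, Fintype.linearCombination_apply]
  have hLhom (w : QuarticExp → ℂ) (i : Fin 6) : (L w i).IsHomogeneous 2 := by
    rw [hL]
    exact (homogeneousSubmodule (Fin 5) ℂ 2).sum_mem fun m _ =>
      (homogeneousSubmodule (Fin 5) ℂ 2).smul_mem _ (hhom m i)
  have hLinv (w : QuarticExp → ℂ) : pairing basePoint (L w) + pairing (L w) basePoint
      = ∑ m, w m • monomial m.1 1 := by
    simp only [← hh, pairing, hL, Finset.mul_sum, Finset.sum_mul, smul_add, ← Finset.sum_add_distrib,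
      mul_smul_comm, smul_mul_assoc]
  let B : (QuarticExp → ℂ) →ₗ[ℂ] (QuarticExp → ℂ) →ₗ[ℂ] (QuarticExp → ℂ) :=
    LinearMap.mk₂ ℂ (fun w w' m => (pairing (L w) (L w')).coeff m.1)
      (fun a b c => by ext m; simp [pairing, add_mul]; ring)
      (fun a b c => by ext m; simp [pairing, mul_add])
      (fun a b c => by ext m; simp [pairing, mul_add]; ring)
      (fun a b c => by ext m; simp [pairing, mul_add])
  refine eq_zero_of_eval_eventually G (fun m : QuarticExp => (pairing basePoint basePoint).coeff m.1) ?_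
  filter_upwards [range_mem_nhds (fun m : QuarticExp => (pairing basePoint basePoint).coeff m.1) B]
  rintro _ ⟨w, rfl⟩
  convert hG (basePoint + L w) (fun i => (basePoint_isHomogeneous i).add (hLhom w i)) using 3
  have hw (m : QuarticExp) : w m
      = (pairing basePoint (L w) + pairing (L w) basePoint).coeff m.1 := by
    simp [hLinv, coeff_sum, coeff_monomial, Subtype.val_inj]
  funext m
  have expand : pairing (basePoint + L w) (basePoint + L w) = pairing basePoint basePoint
      + (pairing basePoint (L w) + pairing (L w) basePoint) + pairing (L w) (L w) := by
    simp only [pairing, Pi.add_apply]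
    ring
  change _ = (pairing (basePoint + L w) (basePoint + L w)).coeff m.1
  rw [expand, coeff_add, coeff_add, ← hw]
  rfl
end

section
/- The set of sextuples (q_0,…,q_5) of homogeneous quadratic forms in ℂ[X_0,…,X_4] for which the only sextuple (ℓ_0,…,ℓ_5) of homogeneous linear forms satisfying Σ_{i=0}^{5} ℓ_i·q_i = 0 is the zero sextuple, is nonempty, and its complement is contained in the zero locus of a nonzero polynomial function on the space of sextuples of quadratic forms; in particular this set is Zariski-dense. -/
/-!
A linear syzygy `∑ ℓᵢ qᵢ = 0` with `ℓᵢ = ∑ⱼ aᵢⱼ Xⱼ` is a vector `a` with 30 entries in the kernel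
of the matrix whose column `(i, j)` lists the coefficients of the cubic `Xⱼ qᵢ`. Its entries are
coordinates of `q` (or zero), so every `30 × 30` minor is a polynomial function of `q` that vanishes
as soon as a nonzero linear syzygy exists (`det_syzMat_eq_zero`).

The minor used here has the rows `Xᵢ² Xₖ` (for `i, k < 5`) together with
`X₀X₂X₃, X₁X₂X₃, X₀X₁X₂, X₀X₁X₃, X₀X₁X₄`. At the sextuple
`(X₀², X₁², X₂², X₃², X₄², X₀X₁ + X₂X₃)` it is upper unitriangular for the lexicographic order on the
pairs `(i, j)`: the row `Xᵢ² Xₖ` meets `Xⱼ Xᵢ'²` only for `(i', j) = (i, k)`, the squarefree rows meet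
none of the `Xⱼ Xᵢ'²`, and the `k`-th squarefree row occurs in `Xⱼ (X₀X₁ + X₂X₃)` only for `j = k`.
So it equals `1` there (`det_syzMat_q0`). This gives both the nonvanishing of the minor and
the absence of linear syzygies at that point.
-/

open MvPolynomial

/-- `NoLinearSyzygy q` says that the only sextuple `(ℓ₀,…,ℓ₅)` of homogeneous linear
forms in `ℂ[X₀,…,X₄]` with `∑ ℓᵢ qᵢ = 0` is the zero sextuple. -/
def NoLinearSyzygy (q : Fin 6 → MvPolynomial (Fin 5) ℂ) : Prop :=
  ∀ l : Fin 6 → MvPolynomial (Fin 5) ℂ, (∀ i, (l i).IsHomogeneous 1) →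
    ∑ i, l i * q i = 0 → ∀ i, l i = 0

/-- Exponent vectors of the 30 cubic monomials selected as rows: `Xᵢ² Xₖ` for `i < 5`, and
five squarefree monomials for `i = 5`. -/
def rowExp (i : Fin 6) (k : Fin 5) : Fin 5 → ℕ :=
  if i = 5 then
    ![![1, 0, 1, 1, 0], ![0, 1, 1, 1, 0], ![1, 1, 1, 0, 0], ![1, 1, 0, 1, 0], ![1, 1, 0, 0, 1]] k
  else fun t => (if t.val = i.val then 2 else 0) + (if t = k then 1 else 0)

/-- The exponent vector `rowExp` as a finitely supported function. -/
noncomputable def rowMon (s : Fin 6 ×ₗ Fin 5) : Fin 5 →₀ ℕ :=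
  Finsupp.equivFunOnFinite.symm (rowExp (ofLex s).1 (ofLex s).2)

/-- The `30 × 30` matrix whose column `(i, j)` holds the coefficients of `Xⱼ qᵢ` at the selected
cubic monomials. -/
noncomputable def syzMat (q : Fin 6 → MvPolynomial (Fin 5) ℂ) :
    Matrix (Fin 6 ×ₗ Fin 5) (Fin 6 ×ₗ Fin 5) ℂ :=
  fun s c => coeff (rowMon s) (X (ofLex c).2 * q (ofLex c).1)

/-- The matrix `syzMat` with the coefficients of the sextuple as indeterminates. The condition
in the `if` says that `Xⱼ` divides the row monomial, all row monomials having degree 3. -/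
noncomputable def genMat : Matrix (Fin 6 ×ₗ Fin 5) (Fin 6 ×ₗ Fin 5)
    (MvPolynomial (Fin 6 × {d : Fin 5 →₀ ℕ // ∑ i : Fin 5, d i = 2}) ℂ) :=
  fun s c =>
    if h : ∑ t : Fin 5, (rowMon s - Finsupp.single (ofLex c).2 1 : Fin 5 →₀ ℕ) t = 2 then
      X ((ofLex c).1, ⟨rowMon s - Finsupp.single (ofLex c).2 1, h⟩)
    else 0

lemma sum_rowExp_sub : ∀ (i : Fin 6) (k j : Fin 5),
    (∑ t : Fin 5, (rowExp i k t - if j = t then 1 else 0) = 2) ↔ rowExp i k j ≠ 0 := by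
  decide +kernel

lemma sum_rowMon_sub (s : Fin 6 ×ₗ Fin 5) (j : Fin 5) :
    (∑ t : Fin 5, (rowMon s - Finsupp.single j 1 : Fin 5 →₀ ℕ) t = 2) ↔ j ∈ (rowMon s).support := by
  rw [Finsupp.mem_support_iff]
  simpa [rowMon, Finsupp.single_apply] using sum_rowExp_sub (ofLex s).1 (ofLex s).2 j

lemma eval_det_genMat (q : Fin 6 → MvPolynomial (Fin 5) ℂ) :
    eval (fun m => (q m.1).coeff m.2.val) genMat.det = (syzMat q).det := by
  rw [RingHom.map_det]
  congr 1
  ext s c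
  simp only [RingHom.mapMatrix_apply, Matrix.map_apply, genMat, syzMat, coeff_X_mul']
  by_cases h : (ofLex c).2 ∈ (rowMon s).support
  · rw [dif_pos ((sum_rowMon_sub s _).2 h), if_pos h, eval_X]
  · rw [dif_neg (fun h' => h ((sum_rowMon_sub s _).1 h')), if_neg h, map_zero]

lemma eq_sum_X_of_isHomogeneous_one {l : MvPolynomial (Fin 5) ℂ} (hl : l.IsHomogeneous 1) :
    l = ∑ j, C (coeff (Finsupp.single j 1) l) * X j := by
  ext d
  simp only [coeff_sum, coeff_C_mul, coeff_X]
  by_cases hd : d.degree = 1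
  · obtain ⟨j, rfl⟩ := (Finsupp.sum_eq_one_iff d).1 hd
    simp [Finsupp.single_left_inj]
  · rw [hl.coeff_eq_zero hd, Finset.sum_eq_zero]
    intro j _
    rw [if_neg, mul_zero]
    rintro rfl
    simp at hd

/-- A nonzero linear syzygy gives a nonzero kernel vector of `syzMat q`. -/
lemma det_syzMat_eq_zero {q : Fin 6 → MvPolynomial (Fin 5) ℂ} (h : ¬ NoLinearSyzygy q) :
    (syzMat q).det = 0 := by
  unfold NoLinearSyzygy at h
  push Not at h
  obtain ⟨l, hl, hsum, i₀, hi₀⟩ := h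
  rw [← Matrix.exists_mulVec_eq_zero_iff]
  refine ⟨fun c => coeff (Finsupp.single (ofLex c).2 1) (l (ofLex c).1), ?_, ?_⟩
  · intro h0
    apply hi₀
    rw [eq_sum_X_of_isHomogeneous_one (hl i₀)]
    refine Finset.sum_eq_zero fun j _ => ?_
    have := congrFun h0 (toLex (i₀, j))
    simp only [ofLex_toLex, Pi.zero_apply] at this
    rw [this, C_0, zero_mul]
  · ext s
    have hs := congrArg (coeff (rowMon s)) hsum
    rw [coeff_sum, coeff_zero] at hs
    rw [Pi.zero_apply, ← hs, Matrix.mulVec, dotProduct, ← Equiv.sum_comp toLex,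
      Fintype.sum_prod_type]
    refine Finset.sum_congr rfl fun i _ => ?_
    conv_rhs => rw [eq_sum_X_of_isHomogeneous_one (hl i), Finset.sum_mul, coeff_sum]
    refine Finset.sum_congr rfl fun j _ => ?_
    rw [mul_assoc, coeff_C_mul, mul_comm]
    rfl

/-- The sextuple `(X₀², X₁², X₂², X₃², X₄², X₀X₁ + X₂X₃)`. -/
noncomputable def q0 : Fin 6 → MvPolynomial (Fin 5) ℂ :=
  ![X 0 ^ 2, X 1 ^ 2, X 2 ^ 2, X 3 ^ 2, X 4 ^ 2, X 0 * X 1 + X 2 * X 3]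

lemma q0_isHomogeneous (i : Fin 6) : (q0 i).IsHomogeneous 2 := by
  have hsq (j : Fin 5) : (X j ^ 2 : MvPolynomial (Fin 5) ℂ).IsHomogeneous 2 :=
    isHomogeneous_X_pow j 2
  have hmul (j k : Fin 5) : (X j * X k : MvPolynomial (Fin 5) ℂ).IsHomogeneous 2 :=
    (isHomogeneous_X ℂ j).mul (isHomogeneous_X ℂ k)
  fin_cases i
  exacts [hsq 0, hsq 1, hsq 2, hsq 3, hsq 4, (hmul 0 1).add (hmul 2 3)]

/-- The coefficient of the monomial with exponent vector `d` in `Xⱼ Xₐ X_b`. -/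
def cubicCoeff (d : Fin 5 → ℕ) (j a b : Fin 5) : ℕ :=
  if ∀ t, (if j = t then 1 else 0) + ((if a = t then 1 else 0) + if b = t then 1 else 0) = d t
  then 1 else 0

/-- The coefficient of the monomial with exponent vector `d` in `Xⱼ` times the `i`-th entry
of `q0`, in a form that can be evaluated. -/
def q0Coeff (d : Fin 5 → ℕ) (i : Fin 6) (j : Fin 5) : ℕ :=
  ![cubicCoeff d j 0 0, cubicCoeff d j 1 1, cubicCoeff d j 2 2, cubicCoeff d j 3 3,
    cubicCoeff d j 4 4, cubicCoeff d j 0 1 + cubicCoeff d j 2 3] i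

lemma coeff_X_mul_X_mul_X (d : Fin 5 →₀ ℕ) (j a b : Fin 5) :
    coeff d (X j * (X a * X b) : MvPolynomial (Fin 5) ℂ) = cubicCoeff d j a b := by
  simp only [X, monomial_mul, coeff_monomial, cubicCoeff, DFunLike.ext_iff, Finsupp.add_apply,
    Finsupp.single_apply, mul_one]
  split_ifs <;> simp

lemma syzMat_q0_apply (s c : Fin 6 ×ₗ Fin 5) :
    syzMat q0 s c =
      q0Coeff (rowExp (ofLex s).1 (ofLex s).2) (ofLex c).1 (ofLex c).2 := by
  have key (a b : Fin 5) := coeff_X_mul_X_mul_X (rowMon s) (ofLex c).2 a b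
  unfold syzMat
  change _ = ((q0Coeff (rowMon s) _ _ : ℕ) : ℂ)
  generalize (ofLex c).1 = i
  fin_cases i <;> simp [q0, q0Coeff, pow_two, mul_add, key]

lemma q0Coeff_eq_zero : ∀ (i i' : Fin 6) (k j : Fin 5), (i' < i ∨ i' = i ∧ j < k) →
    q0Coeff (rowExp i k) i' j = 0 := by
  decide +kernel

lemma q0Coeff_diag : ∀ (i : Fin 6) (k : Fin 5), q0Coeff (rowExp i k) i k = 1 := by
  decide +kernel

/-- At `q0` the matrix is upper unitriangular for the lexicographic order. -/
lemma det_syzMat_q0 : (syzMat q0).det = 1 := by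
  rw [Matrix.det_of_isUpperTriangular]
  · exact Finset.prod_eq_one fun s _ => by rw [syzMat_q0_apply, q0Coeff_diag, Nat.cast_one]
  · intro s c (hlt : c < s)
    rw [syzMat_q0_apply, q0Coeff_eq_zero _ _ _ _ (Prod.Lex.lt_iff.1 hlt), Nat.cast_zero]

/-- The set of sextuples of homogeneous quadratic forms `(q₀,…,q₅)` admitting no
nonzero linear syzygy is nonempty, and its complement is contained in the zero locus
of a nonzero polynomial function in the coefficients of the sextuple (indexed by
`Fin 6 ×` the monomials of total degree 2). -/
theorem stmt_4 :
    (∃ q : Fin 6 → MvPolynomial (Fin 5) ℂ,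
      (∀ i, (q i).IsHomogeneous 2) ∧ NoLinearSyzygy q) ∧
    ∃ G : MvPolynomial (Fin 6 × {d : Fin 5 →₀ ℕ // ∑ i : Fin 5, d i = 2}) ℂ,
      G ≠ 0 ∧
      ∀ q : Fin 6 → MvPolynomial (Fin 5) ℂ, (∀ i, (q i).IsHomogeneous 2) →
        ¬ NoLinearSyzygy q →
        MvPolynomial.eval (fun m => (q m.1).coeff m.2.val) G = 0 := by
  refine ⟨⟨q0, q0_isHomogeneous, ?_⟩, genMat.det, ?_, ?_⟩
  · by_contra h
    exact one_ne_zero (det_syzMat_q0.symm.trans (det_syzMat_eq_zero h))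
  · intro h
    have h1 := eval_det_genMat q0
    rw [h, map_zero, det_syzMat_q0] at h1
    exact zero_ne_one h1
  · intro q _ h
    rw [eval_det_genMat, det_syzMat_eq_zero h]
end
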